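/- Let p, q ∈ 𝒫 satisfy: n_p = n_q; a_p ∩ (n_p × (s_p ∩ s_q)) = a_q ∩ (n_p × (s_p ∩ s_q)); b_p ∩ (n_p × (s_p ∩ s_q)) = b_q ∩ (n_p × (s_p ∩ s_q)); and c_p^z = c_q^z for every z ∈ Z_p ∩ Z_q. Then p and q are compatible in 𝒫, i.e., they have a common lower bound. -/

import Mathlib

open Cardinal Set

/-- A condition `p = ⟨n_p, s_p, a_p, b_p, Z_p, ⟨c_p^z : z ∈ Z_p⟩⟩` of the partial
order `𝒫`. -/
structure PCond (θ : Cardinal.{0}) where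
  /-- `n_p ∈ ω` -/
  n : ℕ
  /-- `s_p`, a finite subset of `θ` -/
  s : Set Ordinal.{0}
  /-- `a_p ⊆ n_p × s_p` -/
  a : Set (ℕ × Ordinal.{0})
  /-- `b_p ⊆ n_p × s_p` -/
  b : Set (ℕ × Ordinal.{0})
  /-- `Z_p`, a finite set of subsets of `θ`, each of cardinality `≤ ℵ₁` -/
  Z : Set (Set Ordinal.{0})
  /-- `⟨c_p^z : z ∈ Z_p⟩` with `c_p^z ⊆ n_p` -/
  c : Set Ordinal.{0} → Set ℕ
  s_fin : s.Finite
  s_sub : s ⊆ Set.Iio θ.ord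
  a_sub : a ⊆ Set.Iio n ×ˢ s
  b_sub : b ⊆ Set.Iio n ×ˢ s
  ab_disj : a ∩ b = ∅
  Z_fin : Z.Finite
  Z_sub : ∀ z ∈ Z, z ⊆ Set.Iio θ.ord ∧ #z ≤ Cardinal.aleph 1
  c_sub : ∀ z ∈ Z, c z ⊆ Set.Iio n

/-- The ordering of `𝒫`:  `q ≤ p` iff conditions (1)–(5) hold. -/
def PLe (θ : Cardinal.{0}) (q p : PCond θ) : Prop :=
  (p.s ⊆ q.s ∧ p.n ≤ q.n ∧ p.Z ⊆ q.Z) ∧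
  (q.a ∩ Set.Iio p.n ×ˢ p.s = p.a ∧ q.b ∩ Set.Iio p.n ×ˢ p.s = p.b) ∧
  (∀ z ∈ p.Z, q.c z ∩ Set.Iio p.n = p.c z) ∧
  (∀ ξ ∈ p.s, ∀ η ∈ p.s, ∀ l : ℕ, p.n ≤ l → l < q.n →
    (l, ξ) ∈ q.a → (l, η) ∉ q.b) ∧
  (∀ z ∈ p.Z, ∀ ξ ∈ z ∩ p.s, ∀ l : ℕ, p.n ≤ l → l < q.n →
    ((l, ξ) ∈ q.a → l ∈ q.c z) ∧ ((l, ξ) ∈ q.b → l ∉ q.c z))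

/-- two conditions of `𝒫` with the same `n` which agree (below `n`)
on the common part of their `s`'s and whose `c`'s agree on the common part of
their `Z`'s are compatible. -/
theorem statement12 (θ : Cardinal.{0}) (hθ : ℵ₀ < θ) (p q : PCond θ)
    (hn : p.n = q.n)
    (ha : p.a ∩ Set.Iio p.n ×ˢ (p.s ∩ q.s) = q.a ∩ Set.Iio p.n ×ˢ (p.s ∩ q.s))
    (hb : p.b ∩ Set.Iio p.n ×ˢ (p.s ∩ q.s) = q.b ∩ Set.Iio p.n ×ˢ (p.s ∩ q.s))
    (hc : ∀ z ∈ p.Z ∩ q.Z, p.c z = q.c z) :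
    ∃ r : PCond θ, PLe θ r p ∧ PLe θ r q := by
  classical
  obtain ⟨n, s, a, b, Z, c, s_fin, s_sub, a_sub, b_sub, ab, Z_fin, Z_sub, c_sub⟩ := p
  obtain ⟨n', s', a', b', Z', c', s_fin', s_sub', a_sub', b_sub', ab', Z_fin', Z_sub', c_sub'⟩ := q
  dsimp only at hn ha hb hc
  subst hn
  have A : ∀ x, x ∈ a → x.1 < n ∧ x.2 ∈ s := fun x hx => a_sub hx
  have B : ∀ x, x ∈ b → x.1 < n ∧ x.2 ∈ s := fun x hx => b_sub hx
  have A' : ∀ x, x ∈ a' → x.1 < n ∧ x.2 ∈ s' := fun x hx => a_sub' hx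
  have B' : ∀ x, x ∈ b' → x.1 < n ∧ x.2 ∈ s' := fun x hx => b_sub' hx
  have D : ∀ x, x ∈ a → x ∉ b := fun x h1 h2 => by
    have : x ∈ a ∩ b := ⟨h1, h2⟩
    rw [ab] at this; exact this
  have D' : ∀ x, x ∈ a' → x ∉ b' := fun x h1 h2 => by
    have : x ∈ a' ∩ b' := ⟨h1, h2⟩
    rw [ab'] at this; exact this
  have HA : ∀ x : ℕ × Ordinal.{0}, x.1 < n → x.2 ∈ s → x.2 ∈ s' → (x ∈ a ↔ x ∈ a') := by
    intro x h1 h2 h3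
    have := Set.ext_iff.1 ha x
    simpa [Set.mem_prod, h1, h2, h3] using this
  have HB : ∀ x : ℕ × Ordinal.{0}, x.1 < n → x.2 ∈ s → x.2 ∈ s' → (x ∈ b ↔ x ∈ b') := by
    intro x h1 h2 h3
    have := Set.ext_iff.1 hb x
    simpa [Set.mem_prod, h1, h2, h3] using this
  have C : ∀ z ∈ Z, ∀ l ∈ c z, l < n := fun z hz l hl => c_sub z hz hl
  have C' : ∀ z ∈ Z', ∀ l ∈ c' z, l < n := fun z hz l hl => c_sub' z hz hl
  refine ⟨⟨n, s ∪ s', a ∪ a', b ∪ b', Z ∪ Z', fun z => if z ∈ Z then c z else c' z,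
    s_fin.union s_fin', Set.union_subset s_sub s_sub', ?_, ?_, ?_, Z_fin.union Z_fin', ?_, ?_⟩,
    ⟨⟨Set.subset_union_left, le_rfl, Set.subset_union_left⟩, ⟨?_, ?_⟩, ?_, ?_, ?_⟩,
    ⟨⟨Set.subset_union_right, le_rfl, Set.subset_union_right⟩, ⟨?_, ?_⟩, ?_, ?_, ?_⟩⟩
  · intro x hx
    simp only [Set.mem_prod, Set.mem_Iio, Set.mem_union] at hx ⊢
    grind
  · intro x hx
    simp only [Set.mem_prod, Set.mem_Iio, Set.mem_union] at hx ⊢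
    grind
  · ext x
    simp only [Set.mem_inter_iff, Set.mem_union, Set.mem_empty_iff_false, iff_false]
    grind
  · rintro z (hz | hz)
    · exact Z_sub z hz
    · exact Z_sub' z hz
  · rintro z hz
    by_cases h : z ∈ Z
    · simpa [h] using c_sub z h
    · simpa [h] using c_sub' z (hz.resolve_left h)
  · ext x
    simp only [Set.mem_inter_iff, Set.mem_prod, Set.mem_Iio, Set.mem_union]
    grind
  · ext x
    simp only [Set.mem_inter_iff, Set.mem_prod, Set.mem_Iio, Set.mem_union]
    grind
  · intro z hz
    have hz : z ∈ Z := hz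
    simpa [hz] using c_sub z hz
  · intro _ _ _ _ l h1 h2
    exact absurd h2 (not_lt.2 h1)
  · intro _ _ _ _ l h1 h2
    exact absurd h2 (not_lt.2 h1)
  · ext x
    simp only [Set.mem_inter_iff, Set.mem_prod, Set.mem_Iio, Set.mem_union]
    grind
  · ext x
    simp only [Set.mem_inter_iff, Set.mem_prod, Set.mem_Iio, Set.mem_union]
    grind
  · intro z hz
    have hz : z ∈ Z' := hz
    by_cases h : z ∈ Z
    · simpa [h, hc z ⟨h, hz⟩] using c_sub' z hz
    · simpa [h] using c_sub' z hz
  · intro _ _ _ _ l h1 h2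
    exact absurd h2 (not_lt.2 h1)
  · intro _ _ _ _ l h1 h2
    exact absurd h2 (not_lt.2 h1)
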